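/- arXiv:2501.12846 — 7 statements merged into one kernel-verified Lean document; each statement's English description precedes it below -/
import Mathlib

section
/- For every n ≥ 1, every i ∈ ℕ and all p, q ∈ ℕ^(ℕ^(n+1)): p =_{ℕ^ℕ}^{n+} q if and only if ⊗_{n+1,i}(p) =_{ℕ^ℕ}^{n+} ⊗_{n+1,i}(q); moreover, for all i ≠ j and all p, q ∈ ℕ^(ℕ^(n+1)), it is not the case that ⊗_{n+1,i}(p) =_{ℕ^ℕ}^{n+} ⊗_{n+1,j}(q). -/
/-!  Common definitions.

`Tower n` is the space ℕ^(ℕ^(n+1)) of the paper: `Tower 0 = ℕ → ℕ`,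
`Tower (n+1) = ℕ → Tower n`, each with the product topology (ℕ discrete).
-/

def Tower : ℕ → Type
  | 0 => ℕ → ℕ
  | n + 1 => ℕ → Tower n

instance Tower.topologicalSpace : (n : ℕ) → TopologicalSpace (Tower n)
  | 0 => inferInstanceAs (TopologicalSpace (ℕ → ℕ))
  | n + 1 => letI := Tower.topologicalSpace n
             inferInstanceAs (TopologicalSpace (ℕ → Tower n))

/-- The Friedman–Stanley jump `E⁺` of an equivalence relation `E` on `X`. -/
def FSJump {X : Type*} (E : X → X → Prop) (p q : ℕ → X) : Prop :=
  (∀ k, ∃ l, E (p k) (q l)) ∧ ∀ l, ∃ k, E (q l) (p k)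

/-- The power `E^ω` of an equivalence relation `E` on `X`. -/
def RelPow {X : Type*} (E : X → X → Prop) (p q : ℕ → X) : Prop :=
  ∀ k, E (p k) (q k)

/-- `eqNatPlus n` is the relation `=_ℕ^{(n+1)+}` on `Tower n = ℕ^(ℕ^(n+1))`. -/
def eqNatPlus : (n : ℕ) → Tower n → Tower n → Prop
  | 0 => FSJump (· = · : ℕ → ℕ → Prop)
  | n + 1 => FSJump (eqNatPlus n)

/-- `eqBairePlus n` is the relation `=_{ℕ^ℕ}^{(n+1)+}` on `Tower (n+1) = ℕ^(ℕ^(n+2))`. -/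
def eqBairePlus : (n : ℕ) → Tower (n + 1) → Tower (n + 1) → Prop
  | 0 => FSJump (· = · : (ℕ → ℕ) → (ℕ → ℕ) → Prop)
  | n + 1 => FSJump (eqBairePlus n)

/-- `FullRel m` on `Tower m = ℕ^(ℕ^(m+1))`: for `m = 2n` it is `(=_ℕ^+)^{n(ω+)}`,
for `m = 2n+1` it is `(=_{ℕ^ℕ}^+)^{n(ω+)}` (with `E^{0(ω+)} = E`,
`E^{(n+1)(ω+)} = ((E^{n(ω+)})^ω)^+`). -/
def FullRel : (m : ℕ) → Tower m → Tower m → Prop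
  | 0 => FSJump (· = · : ℕ → ℕ → Prop)
  | 1 => FSJump (· = · : (ℕ → ℕ) → (ℕ → ℕ) → Prop)
  | m + 2 => FSJump (RelPow (FullRel m))

/-- The pair of canonical elements `(F_{m+1}, I_{m+1})` of `Tower m = ℕ^(ℕ^(m+1))`. -/
def can : (m : ℕ) → Tower m × Tower m
  | 0 => (fun k => if k = 0 then 0 else 1, fun _ => 1)
  | 1 => (fun i k => if i = 0 then 0 else if k + 1 < i then 0 else 1,
          fun i k => if k < i then 0 else 1)
  | m + 2 =>
      (fun i k => if i = 0 then (can m).1 else if k + 1 < i then (can m).1 else (can m).2,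
       fun i k => if k < i then (can m).1 else (can m).2)

/-- The canonical element `F_{m+1} ∈ ℕ^(ℕ^(m+1))`. -/
def canF (m : ℕ) : Tower m := (can m).1

/-- The canonical element `I_{m+1} ∈ ℕ^(ℕ^(m+1))`. -/
def canI (m : ℕ) : Tower m := (can m).2

/-- `p ∈ Tower m = ℕ^(ℕ^(m+1))` is `full_{m+1}`. -/
def IsFull (m : ℕ) (p : Tower m) : Prop := FullRel m p (canF m)

/-- `p ∈ Tower m = ℕ^(ℕ^(m+1))` is `initial_{m+1}`. -/
def IsInitial (m : ℕ) (p : Tower m) : Prop := FullRel m p (canI m)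

open Classical in
/-- The permission operator `∧₀`. -/
noncomputable def perm0 (p q : ℕ → ℕ) : ℕ → ℕ :=
  fun k => if ∀ j ≤ k, p j = q j then p k else 1

/-- The permission operator `∧_{m+1}` on `Tower m = ℕ^(ℕ^(m+1))`
(with `⟨·,·⟩ = Nat.pair`). -/
noncomputable def perm : (m : ℕ) → Tower m → Tower m → Tower m
  | 0, p, q => fun x => max (p (Nat.unpair x).1) (q (Nat.unpair x).2)
  | 1, p, q => fun x => perm0 (p (Nat.unpair x).1) (q (Nat.unpair x).2)
  | m + 2, p, q => fun x k => perm m (p (Nat.unpair x).1 k) (q (Nat.unpair x).2 k)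

/-- The operator `⊗_{m+1,i}` on `Tower m = ℕ^(ℕ^(m+1))` (with `⟨·,·⟩ = Nat.pair`). -/
def otimes : (m : ℕ) → ℕ → Tower m → Tower m
  | 0, i, p => fun k => Nat.pair (p k) i
  | m + 1, i, p => fun k => otimes m i (p k)

/-- `E` continuously reduces to `F`. -/
def ContReduces {X Y : Type*} [TopologicalSpace X] [TopologicalSpace Y]
    (E : X → X → Prop) (F : Y → Y → Prop) : Prop :=
  ∃ f : X → Y, Continuous f ∧ ∀ x x', E x x' ↔ F (f x) (f x')

/-- `SigmaLevel X n` is the pointclass `Σ⁰_{n+1}(X)`: `Σ⁰_1` = open sets,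
`Σ⁰_{n+1}` = countable unions of complements of `Σ⁰_n` sets. -/
def SigmaLevel (X : Type*) [TopologicalSpace X] : ℕ → Set (Set X)
  | 0 => {C | IsOpen C}
  | n + 1 => {C | ∃ A : ℕ → Set X, (∀ i, A i ∈ SigmaLevel X n) ∧ C = ⋃ i, (A i)ᶜ}

/-- The space of `(ι, ar)`-structures with domain ℕ. -/
def Md (ι : Type) (ar : ι → ℕ) : Type := ∀ i : ι, (Fin (ar i) → ℕ) → Bool

instance (ι : Type) (ar : ι → ℕ) : TopologicalSpace (Md ι ar) :=
  inferInstanceAs (TopologicalSpace (∀ i : ι, (Fin (ar i) → ℕ) → Bool))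

/-- Isomorphism of structures with domain ℕ. -/
def Iso {ι : Type} {ar : ι → ℕ} (A B : Md ι ar) : Prop :=
  ∃ σ : ℕ → ℕ, Function.Bijective σ ∧ ∀ i v, A i v = B i (σ ∘ v)

/-- The learning domain of a family: the closure of `K` under isomorphism. -/
def LearnDom {ι : Type} {ar : ι → ℕ} (K : Set (Md ι ar)) : Set (Md ι ar) :=
  {S | ∃ A ∈ K, Iso S A}

/-- The family `K` is `E`-learnable. -/
def Learnable {ι : Type} {ar : ι → ℕ} {X : Type*} [TopologicalSpace X]
    (E : X → X → Prop) (K : Set (Md ι ar)) : Prop :=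
  ∃ Γ : LearnDom K → X, Continuous Γ ∧
    ∀ S S' : LearnDom K, (Iso S.1 S'.1 ↔ E (Γ S) (Γ S'))

/-- A countable family of pairwise nonisomorphic structures. -/
def GoodFamily {ι : Type} {ar : ι → ℕ} (K : Set (Md ι ar)) : Prop :=
  K.Countable ∧ ∀ A ∈ K, ∀ B ∈ K, A ≠ B → ¬ Iso A B

/-- `E` is learn-reducible to `F` (w.r.t. structures in `Md ι ar`). -/
def LearnRed (ι : Type) (ar : ι → ℕ) {X Y : Type*} [TopologicalSpace X]
    [TopologicalSpace Y] (E : X → X → Prop) (F : Y → Y → Prop) : Prop :=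
  ∀ K : Set (Md ι ar), GoodFamily K → Learnable E K → Learnable F K

/-- `E` is compact for learning (w.r.t. structures in `Md ι ar`). -/
def CompactForLearning (ι : Type) (ar : ι → ℕ) {X : Type*} [TopologicalSpace X]
    (E : X → X → Prop) : Prop :=
  ∀ K : Set (Md ι ar), GoodFamily K →
    (Learnable E K ↔ ∀ A ∈ K, ∀ B ∈ K, A ≠ B → Learnable E ({A, B} : Set (Md ι ar)))

/-- Proposition `otimes` for `=_{ℕ^ℕ}^{n+}`. Here `n : ℕ` ranges over
the paper's `n ≥ 1` via the shift: `Tower (n+1) = ℕ^(ℕ^(n+2))`,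
`eqBairePlus n = =_{ℕ^ℕ}^{(n+1)+}`, `otimes (n+1) i = ⊗_{n+2,i}`. -/
theorem stmt_1 (n : ℕ) :
    (∀ i : ℕ, ∀ p q : Tower (n + 1),
        eqBairePlus n p q ↔ eqBairePlus n (otimes (n + 1) i p) (otimes (n + 1) i q)) ∧
    (∀ i j : ℕ, i ≠ j → ∀ p q : Tower (n + 1),
        ¬ eqBairePlus n (otimes (n + 1) i p) (otimes (n + 1) j q)) := by
  induction n with
  | zero =>
    have inj : ∀ (i : ℕ) (a b : ℕ → ℕ), a = b ↔
        (fun k => Nat.pair (a k) i) = (fun k => Nat.pair (b k) i) := by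
      intro i a b
      refine ⟨fun h => by rw [h], fun h => funext fun k => ?_⟩
      exact (Nat.pair_eq_pair.1 (congrFun h k)).1
    refine ⟨fun i p q => ?_, fun i j hij p q h => ?_⟩
    · exact and_congr (forall_congr' fun k => exists_congr fun l => inj i _ _)
        (forall_congr' fun k => exists_congr fun l => inj i _ _)
    · obtain ⟨l, hl⟩ := h.1 0
      exact hij (Nat.pair_eq_pair.1 (congrFun hl 0)).2
  | succ n ih =>
    refine ⟨fun i p q => ?_, fun i j hij p q h => ?_⟩
    · exact and_congr (forall_congr' fun k => exists_congr fun l => ih.1 i _ _)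
        (forall_congr' fun k => exists_congr fun l => ih.1 i _ _)
    · obtain ⟨l, hl⟩ := h.1 0
      exact ih.2 i j hij _ _ hl
end

section
/- For every n ≥ 1, the equivalence relations (=_ℕ^{n+})^ω (on ℕ → ℕ^(ℕ^n) with the product topology) and =_ℕ^{n+} (on ℕ^(ℕ^n)) are continuously bireducible. -/
theorem jump_tag {X : Type} {E : X → X → Prop} {g : ℕ → X → X}
    (hg : ∀ i j x y, E (g i x) (g j y) ↔ i = j ∧ E x y) (i j : ℕ) (p q : ℕ → X) :
    FSJump E (fun k => g i (p k)) (fun k => g j (q k)) ↔ i = j ∧ FSJump E p q := by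
  unfold FSJump
  simp only [hg]
  constructor
  · rintro ⟨h1, h2⟩
    obtain ⟨l, hl, -⟩ := h1 0
    exact ⟨hl, fun k => (h1 k).imp fun _ h => h.2, fun k => (h2 k).imp fun _ h => h.2⟩
  · rintro ⟨rfl, h1, h2⟩
    exact ⟨fun k => (h1 k).imp fun _ h => ⟨rfl, h⟩, fun k => (h2 k).imp fun _ h => ⟨rfl, h⟩⟩

theorem jump_red {X : Type} [TopologicalSpace X] {E : X → X → Prop} {g : ℕ → X → X}
    (hg : ∀ i j x y, E (g i x) (g j y) ↔ i = j ∧ E x y) (hc : ∀ i, Continuous (g i)) :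
    ContReduces (RelPow (FSJump E)) (FSJump E) := by
  refine ⟨fun p x => g (Nat.unpair x).1 (p (Nat.unpair x).1 (Nat.unpair x).2), ?_, ?_⟩
  · refine continuous_pi fun x => (hc _).comp ?_
    exact (continuous_apply _).comp (continuous_apply _)
  · intro p q
    unfold RelPow FSJump
    simp only [hg]
    constructor
    · intro h
      refine ⟨fun x => ?_, fun x => ?_⟩
      · obtain ⟨l, hl⟩ := (h (Nat.unpair x).1).1 (Nat.unpair x).2
        exact ⟨Nat.pair (Nat.unpair x).1 l, by simpa using hl⟩
      · obtain ⟨l, hl⟩ := (h (Nat.unpair x).1).2 (Nat.unpair x).2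
        exact ⟨Nat.pair (Nat.unpair x).1 l, by simpa using hl⟩
    · rintro ⟨h1, h2⟩ i
      refine ⟨fun k => ?_, fun k => ?_⟩
      · obtain ⟨l, hl, h⟩ := h1 (Nat.pair i k)
        simp only [Nat.unpair_pair] at hl h
        rw [← hl] at h
        exact ⟨_, h⟩
      · obtain ⟨l, hl, h⟩ := h2 (Nat.pair i k)
        simp only [Nat.unpair_pair] at hl h
        rw [← hl] at h
        exact ⟨_, h⟩

theorem nat_tag (i j x y : ℕ) : Nat.pair x i = Nat.pair y j ↔ i = j ∧ x = y := by
  rw [Nat.pair_eq_pair, and_comm]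

theorem otimes_tag : ∀ (n i j : ℕ) (p q : Tower n),
    eqNatPlus n (otimes n i p) (otimes n j q) ↔ i = j ∧ eqNatPlus n p q
  | 0, i, j, p, q => jump_tag (E := (· = ·)) (g := fun i x => Nat.pair x i) nat_tag i j p q
  | n + 1, i, j, p, q => jump_tag (E := eqNatPlus n) (g := otimes n) (otimes_tag n) i j p q

theorem otimes_cont : ∀ (n i : ℕ), Continuous (otimes n i)
  | 0, i => continuous_pi (A := fun _ : ℕ => ℕ) fun k =>
      (continuous_of_discreteTopology (f := fun x : ℕ => Nat.pair x i)).comp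
        (continuous_apply (A := fun _ : ℕ => ℕ) k)
  | n + 1, i => continuous_pi (A := fun _ : ℕ => Tower n) fun k =>
      (otimes_cont n i).comp (continuous_apply (A := fun _ : ℕ => Tower n) k)

/-- for every `n ≥ 1` (here via the shift `eqNatPlus n = =_ℕ^{(n+1)+}`),
`(=_ℕ^{n+})^ω` and `=_ℕ^{n+}` are continuously bireducible. -/
theorem stmt_2 (n : ℕ) :
    ContReduces (RelPow (eqNatPlus n)) (eqNatPlus n) ∧
    ContReduces (eqNatPlus n) (RelPow (eqNatPlus n)) := by
  refine ⟨?_, fun p _ => p, continuous_pi fun _ => continuous_id, fun p q => ⟨fun h _ => h, fun h => h 0⟩⟩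
  cases n with
  | zero =>
    exact jump_red (E := ((· = ·) : ℕ → ℕ → Prop)) (g := fun i x => Nat.pair x i) nat_tag
        (fun _ => continuous_of_discreteTopology)
  | succ n => exact jump_red (E := eqNatPlus n) (otimes_tag n) (otimes_cont n)
end

section
/- For every n ≥ 0, the canonical elements F_{2n+1} and I_{2n+1} of ℕ^(ℕ^(2n+1)) are not (=_ℕ^+)^{n(ω+)}-equivalent, and the canonical elements F_{2n+2} and I_{2n+2} of ℕ^(ℕ^(2n+2)) are not (=_{ℕ^ℕ}^+)^{n(ω+)}-equivalent. -/
theorem canFI_aux : ∀ m : ℕ, ¬ FullRel m (canF m) (canI m)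
  | 0 => by
    intro h
    obtain ⟨l, hl⟩ := h.1 0
    simp [canF, canI, can] at hl
  | 1 => by
    intro h
    obtain ⟨l, hl⟩ := h.1 0
    have := congrFun hl l
    simp [canF, canI, can] at this
  | m + 2 => by
    intro h
    obtain ⟨l, hl⟩ := h.1 0
    have h2 := hl l
    simp only [canF, canI, can, if_true, lt_irrefl, if_false] at h2
    exact canFI_aux m h2

/-- `F_{2n+1}` and `I_{2n+1}` are not `(=_ℕ^+)^{n(ω+)}`-equivalent, and
`F_{2n+2}` and `I_{2n+2}` are not `(=_{ℕ^ℕ}^+)^{n(ω+)}`-equivalent. Here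
`canF (2*n) = F_{2n+1}`, `canI (2*n) = I_{2n+1}` in `Tower (2*n) = ℕ^(ℕ^(2n+1))`, and
`FullRel (2*n) = (=_ℕ^+)^{n(ω+)}`; similarly at index `2*n+1` for the even case. -/
theorem stmt_4 (n : ℕ) :
    ¬ FullRel (2 * n) (canF (2 * n)) (canI (2 * n)) ∧
    ¬ FullRel (2 * n + 1) (canF (2 * n + 1)) (canI (2 * n + 1)) := by
  exact ⟨canFI_aux _, canFI_aux _⟩
end

section
/- Let X be a topological space with a countable basis consisting of clopen sets, and let C ⊆ X be open. Then there is a continuous function Γ : X → ℕ^(ℕ^1) such that Γ(x) is full_1 for every x ∈ C and Γ(x) is initial_1 for every x ∉ C. -/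
/-- if `X` has a countable basis of clopen sets and `C ⊆ X` is open, then
there is a continuous `Γ : X → ℕ^(ℕ^1)` (`= Tower 0`) which is `full_1` on `C` and
`initial_1` off `C`. -/
theorem stmt_7 {X : Type*} [TopologicalSpace X]
    (hX : ∃ B : Set (Set X), B.Countable ∧ (∀ U ∈ B, IsClopen U) ∧
      TopologicalSpace.IsTopologicalBasis B)
    (C : Set X) (hC : IsOpen C) :
    ∃ Γ : X → Tower 0, Continuous Γ ∧
      (∀ x ∈ C, IsFull 0 (Γ x)) ∧ (∀ x ∉ C, IsInitial 0 (Γ x)) := by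
  classical
  obtain ⟨B, hBc, hBcl, hB⟩ := hX
  have hS : (insert ∅ {U ∈ B | U ⊆ C}).Countable :=
    (hBc.mono (fun U hU => hU.1)).insert ∅
  obtain ⟨f, hf⟩ := hS.exists_eq_range (Set.insert_nonempty _ _)
  have hmem : ∀ n, f n ∈ insert ∅ {U ∈ B | U ⊆ C} := fun n => hf ▸ Set.mem_range_self n
  have hcl : ∀ n, IsClopen (f n) := by
    intro n
    rcases hmem n with h | h
    · rw [h]; exact isClopen_empty
    · exact hBcl _ h.1
  have hsub : ∀ n, f n ⊆ C := by
    intro n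
    rcases hmem n with h | h
    · rw [h]; exact Set.empty_subset _
    · exact h.2
  let g : X → ℕ → ℕ := fun x k => if k = 0 then 1 else if x ∈ f (k - 1) then 0 else 1
  have hg : Continuous g := by
    refine continuous_pi fun k => ?_
    by_cases hk : k = 0
    · simp only [g, hk, if_true]; exact continuous_const
    · simp only [g, hk, if_false]
      refine continuous_const.if ?_ continuous_const
      intro x hx
      have h0 : frontier (f (k - 1)) = ∅ := (hcl _).frontier_eq
      change x ∈ frontier (f (k - 1)) at hx
      rw [h0] at hx
      exact hx.elim
  refine ⟨g, hg, fun x hx => ?_, fun x hx => ?_⟩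
  · change FSJump (· = ·) (g x) (fun k : ℕ => if k = 0 then 0 else 1)
    obtain ⟨U, hU, hxU, hUC⟩ := hB.exists_subset_of_mem_open hx hC
    have : U ∈ Set.range f := hf ▸ Set.mem_insert_of_mem _ ⟨hU, hUC⟩
    obtain ⟨n, rfl⟩ := this
    refine ⟨fun k => ?_, fun l => ?_⟩
    · by_cases h : k ≠ 0 ∧ x ∈ f (k - 1)
      · exact ⟨0, by simp [g, h.1, h.2]⟩
      · refine ⟨1, ?_⟩
        simp only [g]
        split_ifs <;> simp_all
    · by_cases hl : l = 0
      · exact ⟨n + 1, by simp [g, hl, hxU]⟩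
      · exact ⟨0, by simp [g, hl]⟩
  · change FSJump (· = ·) (g x) (fun _ : ℕ => 1)
    refine ⟨fun k => ⟨0, ?_⟩, fun l => ⟨0, by simp [g]⟩⟩
    have : x ∉ f (k - 1) := fun h => hx (hsub _ h)
    simp [g, this]
end

section
/- Let X be a topological space with a countable basis consisting of clopen sets, and let C ⊆ X belong to Σ⁰_2(X). Then there is a continuous function Γ : X → ℕ^(ℕ^2) such that Γ(x) is full_2 for every x ∈ C and Γ(x) is initial_2 for every x ∉ C. -/
/-- if `X` has a countable basis of clopen sets and `C ∈ Σ⁰_2(X)`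
(here `SigmaLevel X 1`), then there is a continuous `Γ : X → ℕ^(ℕ^2)` (`= Tower 1`)
which is `full_2` on `C` and `initial_2` off `C`. -/
theorem stmt_8 {X : Type*} [TopologicalSpace X]
    (hX : ∃ B : Set (Set X), B.Countable ∧ (∀ U ∈ B, IsClopen U) ∧
      TopologicalSpace.IsTopologicalBasis B)
    (C : Set X) (hC : C ∈ SigmaLevel X 1) :
    ∃ Γ : X → Tower 1, Continuous Γ ∧
      (∀ x ∈ C, IsFull 1 (Γ x)) ∧ (∀ x ∉ C, IsInitial 1 (Γ x)) := by
  classical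
  obtain ⟨B, hBc, hBcl, hB⟩ := hX
  obtain ⟨A, hA, rfl⟩ := hC
  obtain ⟨f, hf⟩ := (hBc.insert ∅).exists_eq_range (Set.insert_nonempty _ _)
  have hfc : ∀ n, IsClopen (f n) := by
    intro n
    have h : f n ∈ insert ∅ B := hf ▸ Set.mem_range_self n
    rcases h with h | h
    · rw [h]; exact isClopen_empty
    · exact hBcl _ h
  have hU : ∃ U : ℕ → ℕ → Set X, (∀ i n, IsClopen (U i n)) ∧ ∀ i x, x ∈ A i ↔ ∃ n, x ∈ U i n := by
    refine ⟨fun i n => if f n ⊆ A i then f n else ∅, ?_, ?_⟩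
    · intro i n
      dsimp only
      split_ifs
      · exact hfc n
      · exact isClopen_empty
    · intro i x
      constructor
      · intro hx
        have ho : IsOpen (A i) := hA i
        obtain ⟨V, hV, hxV, hVA⟩ := hB.exists_subset_of_mem_open hx ho
        have : V ∈ Set.range f := hf ▸ Set.mem_insert_of_mem _ hV
        obtain ⟨n, rfl⟩ := this
        exact ⟨n, by simpa [hVA] using hxV⟩
      · rintro ⟨n, hn⟩
        dsimp only at hn
        split_ifs at hn with h
        · exact h hn
        · exact hn.elim
  obtain ⟨U, hUc, hUA⟩ := hU
  let col : X → ℕ → ℕ → ℕ := fun x i k => if ∃ n, n ≤ k ∧ x ∈ U i n then 1 else 0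
  let G : X → ℕ → ℕ → ℕ := fun x j =>
    if j % 2 = 0 then (fun k => if k < j / 2 then 0 else 1) else col x (j / 2)
  have hG : Continuous G := by
    refine continuous_pi fun j => continuous_pi fun k => ?_
    by_cases hj : j % 2 = 0
    · simp only [G, hj, if_true]
      exact continuous_const
    · simp only [G, hj, if_false, col]
      have hc : IsClopen {x | ∃ n, n ≤ k ∧ x ∈ U (j / 2) n} := by
        have : {x | ∃ n, n ≤ k ∧ x ∈ U (j / 2) n} = ⋃ n ∈ Set.Iic k, U (j / 2) n := by
          ext x; simp
        rw [this]
        exact (Set.finite_Iic k).isClopen_biUnion fun n _ => hUc _ n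
      refine continuous_const.if ?_ continuous_const
      intro a ha
      rw [hc.frontier_eq] at ha
      exact ha.elim
  have hev : ∀ x i, G x (2 * i) = fun k => if k < i then 0 else 1 := by
    intro x i
    simp [G]
  have hodd : ∀ x i, G x (2 * i + 1) = col x i := by
    intro x i
    have h1 : (2 * i + 1) % 2 = 1 := by omega
    have h2 : (2 * i + 1) / 2 = i := by omega
    simp [G, h1, h2]
  have hcol1 : ∀ x i, x ∈ A i → ∃ a, col x i = fun k => if k < a then 0 else 1 := by
    intro x i hx
    have hn := (hUA i x).1 hx
    refine ⟨Nat.find hn, funext fun k => ?_⟩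
    by_cases hk : k < Nat.find hn
    · have : ¬ ∃ n, n ≤ k ∧ x ∈ U i n := by
        rintro ⟨n, h1, h2⟩
        exact Nat.find_min hn (lt_of_le_of_lt h1 hk) h2
      simp only [col, this, hk, if_true, if_false]
    · have : ∃ n, n ≤ k ∧ x ∈ U i n := ⟨Nat.find hn, not_lt.1 hk, Nat.find_spec hn⟩
      simp only [col, this, hk, if_true, if_false]
  have hcol0 : ∀ x i, x ∉ A i → col x i = fun _ => 0 := by
    intro x i hx
    funext k
    have : ¬ ∃ n, n ≤ k ∧ x ∈ U i n := by
      rintro ⟨n, -, h2⟩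
      exact hx ((hUA i x).2 ⟨n, h2⟩)
    simp only [col, this, if_false]
  have hF : ∀ a : ℕ, (can 1).1 (a + 1) = (fun k => if k < a then 0 else 1 : ℕ → ℕ) := by
    intro a
    funext k
    simp [can]
  have hF0 : (can 1).1 0 = (fun _ => 0 : ℕ → ℕ) := by
    funext k
    simp [can]
  have hpar : ∀ j : ℕ, ∃ i, j = 2 * i ∨ j = 2 * i + 1 := fun j => ⟨j / 2, by omega⟩
  refine ⟨G, hG, ?_, ?_⟩
  · intro x hx
    obtain ⟨i₀, hi₀⟩ := Set.mem_iUnion.1 hx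
    constructor
    · intro j
      obtain ⟨i, rfl | rfl⟩ := hpar j
      · exact ⟨i + 1, (hev x i).trans (hF i).symm⟩
      · by_cases h : x ∈ A i
        · obtain ⟨a, ha⟩ := hcol1 x i h
          exact ⟨a + 1, ((hodd x i).trans ha).trans (hF a).symm⟩
        · exact ⟨0, ((hodd x i).trans (hcol0 x i h)).trans hF0.symm⟩
    · intro l
      cases l with
      | zero => exact ⟨2 * i₀ + 1, (((hodd x i₀).trans (hcol0 x i₀ hi₀)).trans hF0.symm).symm⟩
      | succ a => exact ⟨2 * a, ((hev x a).trans (hF a).symm).symm⟩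
  · intro x hx
    have hx' : ∀ i, x ∈ A i := by
      intro i
      by_contra h
      exact hx (Set.mem_iUnion.2 ⟨i, h⟩)
    constructor
    · intro j
      obtain ⟨i, rfl | rfl⟩ := hpar j
      · exact ⟨i, hev x i⟩
      · obtain ⟨a, ha⟩ := hcol1 x i (hx' i)
        exact ⟨a, (hodd x i).trans ha⟩
    · intro l
      exact ⟨2 * l, (hev x l).symm⟩
end

section
/- Let n ≥ 1, let X be a topological space with a countable basis consisting of clopen sets, and let C ⊆ X belong to Σ⁰_n(X). Then there is a continuous function Γ : X → ℕ^(ℕ^n) such that Γ(x) is full_n for every x ∈ C and Γ(x) is initial_n for every x ∉ C. -/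
theorem fs_initial {Y : Type*} (R : Y → Y → Prop) (hr : ∀ y, R y y) (I P : ℕ → Y)
    (h : ∀ i, ∃ l, R (P i) (I l)) :
    FSJump R (fun x => if (Nat.unpair x).1 = 0 then I (Nat.unpair x).2 else P (Nat.unpair x).2) I := by
  refine ⟨fun k => ?_, fun l => ⟨Nat.pair 0 l, ?_⟩⟩
  · by_cases hk : (Nat.unpair k).1 = 0
    · exact ⟨(Nat.unpair k).2, by simp only [hk, if_true]; exact hr _⟩
    · simp only [hk, if_false]; exact h _
  · simp only [Nat.unpair_pair, if_true]; exact hr _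

theorem fs_full {Y : Type*} (R : Y → Y → Prop) (hr : ∀ y, R y y)
    (hs : ∀ y z, R y z → R z y) (I F P : ℕ → Y)
    (hF : ∀ k, F (k + 1) = I k)
    (h : ∀ i, R (P i) (F 0) ∨ ∃ l, R (P i) (I l)) (h0 : ∃ i, R (P i) (F 0)) :
    FSJump R (fun x => if (Nat.unpair x).1 = 0 then I (Nat.unpair x).2 else P (Nat.unpair x).2) F := by
  refine ⟨fun k => ?_, fun l => ?_⟩
  · by_cases hk : (Nat.unpair k).1 = 0
    · exact ⟨(Nat.unpair k).2 + 1, by simp only [hk, if_true, hF]; exact hr _⟩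
    · simp only [hk, if_false]
      rcases h (Nat.unpair k).2 with h | ⟨l, h⟩
      · exact ⟨0, h⟩
      · exact ⟨l + 1, by rw [hF]; exact h⟩
  · rcases l with _ | l
    · obtain ⟨i, hi⟩ := h0
      exact ⟨Nat.pair 1 i, by simpa using hs _ _ hi⟩
    · exact ⟨Nat.pair 0 l, by simp only [Nat.unpair_pair, if_true, hF]; exact hr _⟩

theorem fs_refl {Y : Type*} (R : Y → Y → Prop) (hr : ∀ y, R y y) (p : ℕ → Y) : FSJump R p p :=
  ⟨fun k => ⟨k, hr _⟩, fun k => ⟨k, hr _⟩⟩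

theorem fs_symm {Y : Type*} (R : Y → Y → Prop) (p q : ℕ → Y)
    (h : FSJump R p q) : FSJump R q p := ⟨h.2, h.1⟩

theorem full_refl : ∀ (m : ℕ) (p : Tower m), FullRel m p p
  | 0, p => fs_refl _ (fun _ => rfl) p
  | 1, p => fs_refl _ (fun _ => rfl) p
  | m + 2, p => fs_refl (RelPow (FullRel m)) (fun y k => full_refl m (y k)) p

theorem full_symm : ∀ (m : ℕ) (p q : Tower m), FullRel m p q → FullRel m q p
  | 0, p, q, h => fs_symm _ p q h
  | 1, p, q, h => fs_symm _ p q h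
  | m + 2, p, q, h => fs_symm (RelPow (FullRel m)) p q h

theorem sigma_union {X : Type*} [TopologicalSpace X] : ∀ (n : ℕ) (C D : Set X),
    C ∈ SigmaLevel X n → D ∈ SigmaLevel X n → C ∪ D ∈ SigmaLevel X n
  | 0, _, _, hC, hD => IsOpen.union hC hD
  | n + 1, C, D, hC, hD => by
    obtain ⟨A, hA, rfl⟩ := hC
    obtain ⟨B, hB, rfl⟩ := hD
    refine ⟨fun k => if (Nat.unpair k).1 = 0 then A (Nat.unpair k).2 else B (Nat.unpair k).2,
      fun k => ?_, ?_⟩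
    · dsimp only
      split_ifs
      exacts [hA _, hB _]
    · ext x
      simp only [Set.mem_union, Set.mem_iUnion, Set.mem_compl_iff]
      constructor
      · rintro (⟨i, hi⟩ | ⟨i, hi⟩)
        · exact ⟨Nat.pair 0 i, by simpa using hi⟩
        · exact ⟨Nat.pair 1 i, by simpa using hi⟩
      · rintro ⟨k, hk⟩
        split_ifs at hk
        exacts [Or.inl ⟨_, hk⟩, Or.inr ⟨_, hk⟩]

theorem sigma_inter {X : Type*} [TopologicalSpace X] : ∀ (n : ℕ) (C D : Set X),
    C ∈ SigmaLevel X n → D ∈ SigmaLevel X n → C ∩ D ∈ SigmaLevel X n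
  | 0, _, _, hC, hD => IsOpen.inter hC hD
  | n + 1, C, D, hC, hD => by
    obtain ⟨A, hA, rfl⟩ := hC
    obtain ⟨B, hB, rfl⟩ := hD
    refine ⟨fun k => A (Nat.unpair k).1 ∪ B (Nat.unpair k).2,
      fun k => sigma_union n _ _ (hA _) (hB _), ?_⟩
    ext x
    simp only [Set.mem_inter_iff, Set.mem_iUnion, Set.mem_compl_iff, Set.mem_union, not_or]
    constructor
    · rintro ⟨⟨i, hi⟩, ⟨j, hj⟩⟩
      exact ⟨Nat.pair i j, by simpa using ⟨hi, hj⟩⟩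
    · rintro ⟨k, h1, h2⟩
      exact ⟨⟨_, h1⟩, ⟨_, h2⟩⟩

theorem sigma_finter {X : Type*} [TopologicalSpace X] (n : ℕ) (D : ℕ → Set X)
    (hD : ∀ j, D j ∈ SigmaLevel X n) (k : ℕ) :
    {x | ∀ j ≤ k, x ∈ D j} ∈ SigmaLevel X n := by
  induction k with
  | zero => simpa using hD 0
  | succ k ih =>
    convert sigma_inter n _ _ ih (hD (k + 1)) using 1
    ext x
    simp only [Set.mem_setOf_eq, Set.mem_inter_iff]
    constructor
    · exact fun h => ⟨fun j hj => h j (by omega), h _ le_rfl⟩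
    · rintro ⟨h1, h2⟩ j hj
      rcases Nat.le_succ_iff.1 hj with h | rfl
      exacts [h1 j h, h2]

theorem open_seq {X : Type*} [TopologicalSpace X]
    (hX : ∃ B : Set (Set X), B.Countable ∧ (∀ U ∈ B, IsClopen U) ∧
      TopologicalSpace.IsTopologicalBasis B) (C : Set X) (hC : IsOpen C) :
    ∃ U : ℕ → Set X, (∀ i, IsClopen (U i)) ∧ C = ⋃ i, U i := by
  obtain ⟨B, hc, hcl, hb⟩ := hX
  have h1 : (insert ∅ {s ∈ B | s ⊆ C}).Countable :=
    (hc.mono (Set.sep_subset _ _)).insert _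
  obtain ⟨U, hU⟩ := h1.exists_eq_range (Set.insert_nonempty _ _)
  refine ⟨U, fun i => ?_, ?_⟩
  · have : U i ∈ insert ∅ {s ∈ B | s ⊆ C} := hU ▸ Set.mem_range_self i
    rcases this with h | h
    · rw [h]; exact isClopen_empty
    · exact hcl _ h.1
  · ext x
    rw [← Set.sUnion_range, ← hU]
    constructor
    · intro hx
      obtain ⟨s, hs, hxs, hsC⟩ := hb.exists_subset_of_mem_open hx hC
      exact ⟨s, Or.inr ⟨hs, hsC⟩, hxs⟩
    · rintro ⟨s, rfl | hs, hx⟩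
      · exact hx.elim
      · exact hs.2 hx

open Classical in
theorem cont_ite {X : Type*} [TopologicalSpace X] (U : Set X) (hU : IsClopen U) (a b : ℕ) :
    Continuous (fun x => if x ∈ U then a else b) := by
  refine continuous_const.if (fun x hx => ?_) continuous_const
  have : frontier {x | x ∈ U} = ∅ := hU.frontier_eq
  rw [this] at hx
  exact hx.elim

theorem cont_comb {X Y : Type*} [TopologicalSpace X] [TopologicalSpace Y] (I : ℕ → Y)
    (P : X → ℕ → Y) (hP : ∀ i, Continuous fun x => P x i) :
    Continuous (fun x k => if (Nat.unpair k).1 = 0 then I (Nat.unpair k).2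
      else P x (Nat.unpair k).2) := by
  refine continuous_pi fun k => ?_
  split_ifs
  exacts [continuous_const, hP _]

theorem main_aux {X : Type*} [TopologicalSpace X]
    (hX : ∃ B : Set (Set X), B.Countable ∧ (∀ U ∈ B, IsClopen U) ∧
      TopologicalSpace.IsTopologicalBasis B) : ∀ (n : ℕ)
    (C : Set X) (_ : C ∈ SigmaLevel X n),
    ∃ Γ : X → Tower n, Continuous Γ ∧
      (∀ x ∈ C, IsFull n (Γ x)) ∧ (∀ x ∉ C, IsInitial n (Γ x))
  | 0, C, hC => by
    classical
    obtain ⟨U, hU, rfl⟩ := open_seq hX C hC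
    refine ⟨fun x k => if (Nat.unpair k).1 = 0 then 1
      else if x ∈ U (Nat.unpair k).2 then 0 else 1, ?_, fun x hx => ?_, fun x hx => ?_⟩
    · exact cont_comb (fun _ => 1) (fun x i => if x ∈ U i then 0 else 1)
        fun i => cont_ite _ (hU i) _ _
    · refine fs_full (· = ·) (fun _ => rfl) (fun _ _ => Eq.symm) (fun _ => 1)
        (fun k => if k = 0 then 0 else 1) (fun i => if x ∈ U i then 0 else 1) (by simp) ?_ ?_
      · intro i
        by_cases h : x ∈ U i <;> simp [h]
      · obtain ⟨i, hi⟩ := Set.mem_iUnion.1 hx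
        exact ⟨i, by simp [hi]⟩
    · refine fs_initial (· = ·) (fun _ => rfl) (fun _ => 1)
        (fun i => if x ∈ U i then 0 else 1) ?_
      intro i
      have : x ∉ U i := fun h => hx (Set.mem_iUnion.2 ⟨i, h⟩)
      simp [this]
  | 1, C, hC => by
    classical
    obtain ⟨A, hA, rfl⟩ := hC
    choose U hU hAU using fun i => open_seq hX (A i) (hA i)
    let I : ℕ → ℕ → ℕ := fun i k => if k < i then 0 else 1
    let P : X → ℕ → ℕ → ℕ := fun x i k => if x ∈ ⋃ j ∈ Set.Iic k, U i j then 1 else 0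
    have key : ∀ x i, x ∈ A i → ∃ l, P x i = I l := by
      intro x i hx
      rw [hAU] at hx
      have hx := Set.mem_iUnion.1 hx
      refine ⟨Nat.find hx, ?_⟩
      funext k
      by_cases hk : k < Nat.find hx
      · have : ¬ ∃ j, j ≤ k ∧ x ∈ U i j := by
          rintro ⟨j, hj, h⟩
          exact Nat.find_min hx (lt_of_le_of_lt hj hk) h
        simp [P, I, hk]
        intro j hj h
        exact this ⟨j, hj, h⟩
      · have : ∃ j, j ≤ k ∧ x ∈ U i j := ⟨_, not_lt.1 hk, Nat.find_spec hx⟩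
        simp [P, I, hk]
        simpa using this
    have key2 : ∀ x i, x ∉ A i → P x i = fun _ => 0 := by
      intro x i hx
      funext k
      have : x ∉ ⋃ j ∈ Set.Iic k, U i j := by
        intro h
        simp only [Set.mem_iUnion] at h
        obtain ⟨j, -, h⟩ := h
        exact hx (by rw [hAU]; exact Set.mem_iUnion.2 ⟨j, h⟩)
      simp only [P, if_neg this]
    refine ⟨fun x k => if (Nat.unpair k).1 = 0 then I (Nat.unpair k).2
      else P x (Nat.unpair k).2, ?_, fun x hx => ?_, fun x hx => ?_⟩
    · refine cont_comb I P fun i => continuous_pi fun k => cont_ite _ ?_ _ _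
      exact (Set.finite_Iic k).isClopen_biUnion fun j _ => hU i j
    · refine fs_full (· = ·) (fun _ => rfl) (fun _ _ => Eq.symm) I
        (fun i k => if i = 0 then 0 else if k + 1 < i then 0 else 1) (P x) ?_ ?_ ?_
      · intro k; funext j; simp [I]
      · intro i
        by_cases h : x ∈ A i
        · exact Or.inr (key x i h)
        · left; simpa using key2 x i h
      · obtain ⟨i, hi⟩ := Set.mem_iUnion.1 hx
        exact ⟨i, by simpa using key2 x i hi⟩
    · refine fs_initial (· = ·) (fun _ => rfl) I (P x) fun i => key x i ?_
      by_contra h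
      exact hx (Set.mem_iUnion.2 ⟨i, h⟩)
  | m + 2, C, hC => by
    classical
    obtain ⟨A, hA, rfl⟩ := hC
    choose D hD hAD using hA
    choose G hG hGf hGi using fun i k => main_aux hX m _ (sigma_finter m (D i) (hD i) k)
    let I : ℕ → ℕ → Tower m := fun i k => if k < i then (can m).1 else (can m).2
    let P : X → ℕ → ℕ → Tower m := fun x i k => G i k x
    have key : ∀ x i, x ∈ A i → ∃ l, RelPow (FullRel m) (P x i) (I l) := by
      intro x i hx
      rw [hAD] at hx
      have hx : ∃ j, x ∉ D i j := by simpa using hx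
      refine ⟨Nat.find hx, fun k => ?_⟩
      by_cases hk : k < Nat.find hx
      · simp only [I, hk, if_true]
        exact hGf i k x fun j hj => not_not.1 (Nat.find_min hx (lt_of_le_of_lt hj hk))
      · simp only [I, hk, if_false]
        exact hGi i k x fun h => Nat.find_spec hx (h _ (not_lt.1 hk))
    have key2 : ∀ x i, x ∉ A i → RelPow (FullRel m) (P x i) (fun _ => (can m).1) := by
      intro x i hx k
      rw [hAD] at hx
      have hx : ∀ j, x ∈ D i j := by simpa using hx
      exact hGf i k x fun j _ => hx j
    refine ⟨fun x k => if (Nat.unpair k).1 = 0 then I (Nat.unpair k).2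
      else P x (Nat.unpair k).2, ?_, fun x hx => ?_, fun x hx => ?_⟩
    · exact cont_comb I P fun i => continuous_pi fun k => hG i k
    · refine fs_full (RelPow (FullRel m)) (fun y k => full_refl m _)
        (fun y z h k => full_symm m _ _ (h k)) I
        (fun i k => if i = 0 then (can m).1 else if k + 1 < i then (can m).1 else (can m).2)
        (P x) ?_ ?_ ?_
      · intro k; funext j; simp [I]
      · intro i
        by_cases h : x ∈ A i
        · exact Or.inr (key x i h)
        · left; simpa using key2 x i h
      · obtain ⟨i, hi⟩ := Set.mem_iUnion.1 hx
        exact ⟨i, by simpa using key2 x i hi⟩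
    · refine fs_initial (RelPow (FullRel m)) (fun y k => full_refl m _) I (P x)
        fun i => key x i ?_
      by_contra h
      exact hx (Set.mem_iUnion.2 ⟨i, h⟩)

/-- for `n ≥ 1` (here via the shift: `SigmaLevel X n = Σ⁰_{n+1}(X)`,
`Tower n = ℕ^(ℕ^(n+1))`, `IsFull n = full_{n+1}`, `IsInitial n = initial_{n+1}`):
if `X` has a countable basis of clopen sets and `C ∈ Σ⁰_{n+1}(X)`, then there is a
continuous `Γ : X → ℕ^(ℕ^(n+1))` which is `full_{n+1}` on `C` and `initial_{n+1}`
off `C`. -/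
theorem stmt_9 (n : ℕ) {X : Type*} [TopologicalSpace X]
    (hX : ∃ B : Set (Set X), B.Countable ∧ (∀ U ∈ B, IsClopen U) ∧
      TopologicalSpace.IsTopologicalBasis B)
    (C : Set X) (hC : C ∈ SigmaLevel X n) :
    ∃ Γ : X → Tower n, Continuous Γ ∧
      (∀ x ∈ C, IsFull n (Γ x)) ∧ (∀ x ∉ C, IsInitial n (Γ x)) := by
  exact main_aux hX n C hC
end

section
/- Let n ≥ 1 and let K = {A_i : i ∈ ℕ} be a countable family of pairwise nonisomorphic structures in Mod. Then K is =_ℕ^{n+}-learnable if and only if for all i ≠ j there exists a set C ∈ Σ⁰_{2n-1}(Mod) such that either (every S ≅ A_i is in C and no S ≅ A_j is in C) or (every S ≅ A_j is in C and no S ≅ A_i is in C). -/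
open Set TopologicalSpace Topology

section SigmaLemmas
variable {X Y : Type*} [TopologicalSpace X] [TopologicalSpace Y]

theorem sig_preimage {f : X → Y} (hf : Continuous f) :
    ∀ (n : ℕ) (C : Set Y), C ∈ SigmaLevel Y n → f ⁻¹' C ∈ SigmaLevel X n
  | 0, _, h => IsOpen.preimage hf h
  | n + 1, _, h => by
    obtain ⟨A, hA, rfl⟩ := h
    exact ⟨fun i => f ⁻¹' A i, fun i => sig_preimage hf n _ (hA i), by simp [preimage_iUnion]⟩

theorem sig_subtype (s : Set X) : ∀ (n : ℕ) (C : Set s), C ∈ SigmaLevel s n →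
    ∃ D ∈ SigmaLevel X n, C = Subtype.val ⁻¹' D
  | 0, C, h => by
    obtain ⟨D, hD, rfl⟩ := isOpen_induced_iff.1 h
    exact ⟨D, hD, rfl⟩
  | n + 1, C, h => by
    obtain ⟨A, hA, rfl⟩ := h
    choose D hD hDA using fun i => sig_subtype s n _ (hA i)
    exact ⟨⋃ i, (D i)ᶜ, ⟨D, hD, rfl⟩, by simp [preimage_iUnion, hDA]⟩

theorem sig_univ_empty : ∀ n, (univ : Set X) ∈ SigmaLevel X n ∧ (∅ : Set X) ∈ SigmaLevel X n
  | 0 => ⟨isOpen_univ, isOpen_empty⟩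
  | n + 1 => ⟨⟨fun _ => ∅, fun _ => (sig_univ_empty n).2, by simp [iUnion_const]⟩,
      ⟨fun _ => univ, fun _ => (sig_univ_empty n).1, by simp⟩⟩

theorem sig_iUnion_compl {κ : Type*} [Countable κ] {n : ℕ} {A : κ → Set X}
    (h : ∀ k, A k ∈ SigmaLevel X n) : (⋃ k, (A k)ᶜ) ∈ SigmaLevel X (n + 1) := by
  cases isEmpty_or_nonempty κ with
  | inl _ => simpa using (sig_univ_empty (X := X) (n + 1)).2
  | inr _ =>
    obtain ⟨e, he⟩ := exists_surjective_nat κ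
    exact ⟨fun i => A (e i), fun i => h _, (he.iUnion_comp (fun k => (A k)ᶜ)).symm⟩

theorem sig_iUnion {κ : Type*} [Countable κ] {n : ℕ} {A : κ → Set X}
    (h : ∀ k, A k ∈ SigmaLevel X n) : (⋃ k, A k) ∈ SigmaLevel X n := by
  cases n with
  | zero => exact isOpen_iUnion h
  | succ n =>
    choose B hB hAB using h
    have : (⋃ k, A k) = ⋃ p : κ × ℕ, (B p.1 p.2)ᶜ := by
      rw [iUnion_prod']; exact iUnion_congr hAB
    rw [this]
    exact sig_iUnion_compl fun p => hB _ _

theorem sig_union {n : ℕ} {A B : Set X} (hA : A ∈ SigmaLevel X n) (hB : B ∈ SigmaLevel X n) :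
    A ∪ B ∈ SigmaLevel X n := by
  rw [union_eq_iUnion]
  exact sig_iUnion (by rintro (_ | _) <;> simpa)

theorem sig_inter {n : ℕ} {A B : Set X} (hA : A ∈ SigmaLevel X n) (hB : B ∈ SigmaLevel X n) :
    A ∩ B ∈ SigmaLevel X n := by
  cases n with
  | zero => exact IsOpen.inter hA hB
  | succ n =>
    obtain ⟨A, hA, rfl⟩ := hA
    obtain ⟨B, hB, rfl⟩ := hB
    have : (⋃ i, (A i)ᶜ) ∩ (⋃ i, (B i)ᶜ) = ⋃ p : ℕ × ℕ, (A p.1 ∪ B p.2)ᶜ := by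
      ext x; simp
    rw [this]
    exact sig_iUnion_compl fun p => sig_union (hA _) (hB _)

theorem sig_iInter_le {n : ℕ} {A : ℕ → Set X} (h : ∀ k, A k ∈ SigmaLevel X n) (j : ℕ) :
    {x | ∀ i ≤ j, x ∈ A i} ∈ SigmaLevel X n := by
  induction j with
  | zero => convert h 0 using 1; ext x; simp
  | succ j ih =>
    convert sig_inter ih (h (j + 1)) using 1
    ext x
    simp only [mem_setOf_eq, mem_inter_iff]
    refine ⟨fun H => ⟨fun i hi => H i (by omega), H _ le_rfl⟩, fun H i hi => ?_⟩
    rcases Nat.lt_or_ge j i with h1 | h1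
    · obtain rfl : i = j + 1 := by omega
      exact H.2
    · exact H.1 i h1

theorem sig_baire {f : X → Y} (hf : Continuous f) (n : ℕ) (C : Set Y) (hC : C ∈ SigmaLevel Y n) :
    BaireMeasurableSet (f ⁻¹' C) := by
  induction n generalizing C with
  | zero => exact (IsOpen.preimage hf hC).baireMeasurableSet
  | succ n ih =>
    obtain ⟨A, hA, rfl⟩ := hC
    rw [preimage_iUnion]
    exact BaireMeasurableSet.iUnion fun i => (ih _ (hA i)).compl

end SigmaLemmas

section Vaught
variable {G X : Type*} [TopologicalSpace G] [TopologicalSpace X]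

/-- Vaught transform. -/
def vaught (a : G → X → X) (U : Set G) (C : Set X) : Set X :=
  {S | ¬ IsMeagre ({g | a g S ∈ C} ∩ U)}

theorem vaught_sig [BaireSpace G] [SecondCountableTopology G] (a : G → X → X)
    (h1 : ∀ S, Continuous fun g => a g S) (h2 : ∀ g, Continuous (a g)) (n : ℕ) :
    ∀ (C : Set X) (_ : C ∈ SigmaLevel X n) (U : Set G) (_ : IsOpen U),
      vaught a U C ∈ SigmaLevel X n := by
  classical
  induction n with
  | zero =>
    intro C hC U hU
    have : vaught a U C = ⋃ g ∈ U, (a g) ⁻¹' C := by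
      ext S
      simp only [vaught, mem_setOf_eq, mem_iUnion, mem_preimage, exists_prop]
      constructor
      · intro h
        obtain ⟨g, hg, hgU⟩ := nonempty_of_not_isMeagre h
        exact ⟨g, hgU, hg⟩
      · rintro ⟨g, hgU, hg⟩
        exact not_isMeagre_of_isOpen ((IsOpen.preimage (h1 S) hC).inter hU) ⟨g, hg, hgU⟩
    rw [this]
    exact isOpen_biUnion fun g _ => IsOpen.preimage (h2 g) hC
  | succ n ih =>
    rintro C ⟨A, hA, rfl⟩ U hU
    have : vaught a U (⋃ i, (A i)ᶜ) = ⋃ p : ℕ × countableBasis G,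
        (if (p.2 : Set G) ⊆ U then vaught a p.2 (A p.1) else univ)ᶜ := by
      ext S
      have e1 : ({g | a g S ∈ ⋃ i, (A i)ᶜ} ∩ U) = ⋃ i, ({g | a g S ∉ A i} ∩ U) := by
        ext g; simp
      have e2 : (¬ IsMeagre ({g | a g S ∈ ⋃ i, (A i)ᶜ} ∩ U)) ↔
          ∃ i, ¬ IsMeagre ({g | a g S ∉ A i} ∩ U) := by
        rw [e1]
        constructor
        · intro h
          by_contra! h'
          exact h (isMeagre_iUnion h')
        · rintro ⟨i, hi⟩ h
          exact hi (h.mono (subset_iUnion (fun i => {g | a g S ∉ A i} ∩ U) i))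
      rw [vaught, mem_setOf_eq, e2]
      simp only [mem_iUnion, Prod.exists]
      refine exists_congr fun i => ?_
      constructor
      · intro h
        obtain ⟨O, hO, hEq⟩ := (sig_baire (h1 S) n _ (hA i)).compl.residualEq_isOpen
        have hm : IsMeagre {g | ¬ (a g S ∉ A i ↔ g ∈ O)} := by
          rw [IsMeagre]
          filter_upwards [Filter.eventuallyEq_set.1 hEq] with g hg
          simpa using hg
        have hne : (O ∩ U).Nonempty := by
          by_contra! hemp
          refine h (hm.mono ?_)
          rintro g ⟨hg, hgU⟩
          simp only [mem_setOf_eq] at hg ⊢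
          intro hh
          have : g ∈ O ∩ U := ⟨hh.1 hg, hgU⟩
          simp [hemp] at this
        obtain ⟨g, hg⟩ := hne
        obtain ⟨V, hV, hgV, hVO⟩ := (isBasis_countableBasis G).exists_subset_of_mem_open hg
          (hO.inter hU)
        refine ⟨⟨V, hV⟩, ?_⟩
        have hVU : V ⊆ U := fun x hx => (hVO hx).2
        simp only [hVU, if_true, vaught, mem_compl_iff, mem_setOf_eq, not_not]
        refine hm.mono ?_
        rintro x ⟨hx, hxV⟩
        have := (hVO hxV).1
        simp only [mem_setOf_eq] at hx ⊢
        tauto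
      · rintro ⟨⟨V, hV⟩, h⟩
        by_cases hVU : V ⊆ U
        · simp only [hVU, if_true, vaught, mem_compl_iff, mem_setOf_eq, not_not] at h
          intro h'
          refine not_isMeagre_of_isOpen (isOpen_of_mem_countableBasis hV)
            (nonempty_of_mem_countableBasis hV) ((h.union h').mono ?_)
          intro g hg
          by_cases hgA : a g S ∈ A i
          · exact Or.inl ⟨hgA, hg⟩
          · exact Or.inr ⟨hgA, hVU hg⟩
        · simp [hVU] at h
    rw [this]
    refine sig_iUnion_compl fun p => ?_
    split_ifs
    · exact ih _ (hA _) _ (isOpen_of_mem_countableBasis p.2.2)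
    · exact (sig_univ_empty n).1

end Vaught

/-- The group of permutations with its Polish topology. -/
def SInf : Set ((ℕ → ℕ) × (ℕ → ℕ)) := {p | (∀ n, p.1 (p.2 n) = n) ∧ ∀ n, p.2 (p.1 n) = n}

theorem cont_eval : Continuous fun q : (ℕ → ℕ) × ℕ => q.1 q.2 := by
  rw [continuous_discrete_rng]
  intro b
  rw [isOpen_iff_mem_nhds]
  rintro ⟨f, n⟩ h
  rw [nhds_prod_eq, nhds_discrete ℕ, Filter.prod_pure, Filter.mem_map]
  exact (isOpen_discrete ({b} : Set ℕ)).preimage (continuous_apply n) |>.mem_nhds h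

theorem SInf_closed : IsClosed SInf := by
  unfold SInf
  simp only [setOf_and, setOf_forall]
  refine IsClosed.inter (isClosed_iInter fun n => ?_) (isClosed_iInter fun n => ?_)
  · refine isClosed_eq (cont_eval.comp (f := fun p : (ℕ → ℕ) × (ℕ → ℕ) => (p.1, p.2 n)) ?_)
      continuous_const
    fun_prop
  · refine isClosed_eq (cont_eval.comp (f := fun p : (ℕ → ℕ) × (ℕ → ℕ) => (p.2, p.1 n)) ?_)
      continuous_const
    fun_prop

instance : PolishSpace SInf := SInf_closed.polishSpace

def lmul (h g : SInf) : SInf := ⟨(fun n => h.1.1 (g.1.1 n), fun n => g.1.2 (h.1.2 n)), by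
  constructor <;> intro n <;> simp [g.2.1, h.2.1, g.2.2, h.2.2]⟩

def sinv (h : SInf) : SInf := ⟨(h.1.2, h.1.1), ⟨h.2.2, h.2.1⟩⟩

theorem lmul_cont (h : SInf) : Continuous (lmul h) := by
  refine Continuous.subtype_mk (Continuous.prodMk ?_ ?_) _
  · refine continuous_pi fun n => ?_
    exact (continuous_of_discreteTopology (f := h.1.1)).comp (by fun_prop)
  · fun_prop

def lmulHomeo (h : SInf) : SInf ≃ₜ SInf where
  toFun := lmul h
  invFun := lmul (sinv h)
  left_inv g := by
    apply Subtype.ext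
    simp [lmul, sinv, h.2.1, h.2.2]
  right_inv g := by
    apply Subtype.ext
    simp [lmul, sinv, h.2.1, h.2.2]
  continuous_toFun := lmul_cont h
  continuous_invFun := lmul_cont _

section Act
variable {ι : Type} {ar : ι → ℕ}

def act (g : SInf) (S : Md ι ar) : Md ι ar := fun i v => S i (g.1.1 ∘ v)

theorem act_cont2 (g : SInf) : Continuous (act (ι := ι) (ar := ar) g) := by
  refine continuous_pi fun i => continuous_pi fun v => ?_
  have h : Continuous fun S : (∀ i : ι, (Fin (ar i) → ℕ) → Bool) => S i (g.1.1 ∘ v) := by fun_prop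
  exact h

theorem act_cont1 (S : Md ι ar) : Continuous fun g => act g S := by
  refine continuous_pi fun i => continuous_pi fun v => ?_
  have h : Continuous fun g : SInf => (g.1.1 ∘ v) :=
    continuous_pi fun j => (continuous_apply (v j)).comp (continuous_fst.comp continuous_subtype_val)
  exact (continuous_of_discreteTopology (f := S i)).comp h

theorem act_act (g h : SInf) (S : Md ι ar) : act g (act h S) = act (lmul h g) S := rfl

theorem iso_iff_act (S T : Md ι ar) : Iso S T ↔ ∃ g, S = act g T := by
  constructor
  · rintro ⟨σ, hσ, h⟩
    let e := Equiv.ofBijective σ hσ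
    exact ⟨⟨(e, e.symm), ⟨fun n => by simp, fun n => by simp⟩⟩, funext fun i => funext fun v => h i v⟩
  · rintro ⟨g, rfl⟩
    exact ⟨g.1.1, ⟨Function.LeftInverse.injective (g := g.1.2) g.2.2,
      Function.RightInverse.surjective (g := g.1.2) g.2.1⟩, fun i v => rfl⟩

theorem iso_symm {S T : Md ι ar} (h : Iso S T) : Iso T S := by
  rw [iso_iff_act] at *
  obtain ⟨g, rfl⟩ := h
  refine ⟨sinv g, ?_⟩
  funext i v
  simp only [act, sinv]
  congr 1
  funext x
  simp [g.2.1]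

theorem iso_trans {S T R : Md ι ar} (h : Iso S T) (h' : Iso T R) : Iso S R := by
  rw [iso_iff_act] at *
  obtain ⟨g, rfl⟩ := h
  obtain ⟨g', rfl⟩ := h'
  exact ⟨_, act_act _ _ _⟩

theorem iso_refl (S : Md ι ar) : Iso S S := ⟨id, Function.bijective_id, fun _ _ => rfl⟩

instance : Nonempty SInf := ⟨⟨(id, id), by simp [SInf]⟩⟩

theorem exists_invariant (n : ℕ) (C : Set (Md ι ar)) (hC : C ∈ SigmaLevel (Md ι ar) n) :
    ∃ D ∈ SigmaLevel (Md ι ar) n, (∀ S T, Iso S T → T ∈ D → S ∈ D) ∧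
      (∀ S, (∀ T, Iso T S → T ∈ C) → S ∈ D) ∧ (∀ S, (∀ T, Iso T S → T ∉ C) → S ∉ D) := by
  refine ⟨vaught act univ C, vaught_sig act act_cont1 act_cont2 n C hC univ isOpen_univ, ?_, ?_, ?_⟩
  · intro S T hST hT hS
    rw [iso_iff_act] at hST
    obtain ⟨h, rfl⟩ := hST
    apply hT
    have := hS.preimage_of_isOpenMap (lmulHomeo (sinv h)).continuous (lmulHomeo (sinv h)).isOpenMap
    convert this using 1
    ext g
    simp only [inter_univ, mem_setOf_eq, preimage_setOf_eq, act_act]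
    have : lmul h ((lmulHomeo (sinv h)) g) = g := (lmulHomeo h).right_inv g
    rw [this]
  · intro S hS
    have : {g : SInf | act g S ∈ C} = univ := by
      ext g; simpa using hS _ ((iso_iff_act _ _).2 ⟨g, rfl⟩)
    simp only [vaught, mem_setOf_eq, this, inter_univ]
    exact not_isMeagre_of_isOpen isOpen_univ univ_nonempty
  · intro S hS
    have : {g : SInf | act g S ∈ C} = ∅ := by
      ext g; simpa using hS _ ((iso_iff_act _ _).2 ⟨g, rfl⟩)
    simp only [vaught, mem_setOf_eq, this, empty_inter, not_not]
    exact IsMeagre.empty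

end Act

section Jump
variable {X Y : Type*}

theorem fsjump_equiv {E : X → X → Prop} (h : Equivalence E) : Equivalence (FSJump E) where
  refl p := ⟨fun k => ⟨k, h.refl _⟩, fun k => ⟨k, h.refl _⟩⟩
  symm := fun ⟨a, b⟩ => ⟨b, a⟩
  trans := by
    rintro p q r ⟨a, b⟩ ⟨c, d⟩
    constructor
    · intro k
      obtain ⟨l, hl⟩ := a k
      obtain ⟨m, hm⟩ := c l
      exact ⟨m, h.trans hl hm⟩
    · intro k
      obtain ⟨l, hl⟩ := d k
      obtain ⟨m, hm⟩ := b l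
      exact ⟨m, h.trans hl hm⟩

theorem eqNat_equiv : ∀ n, Equivalence (eqNatPlus n)
  | 0 => fsjump_equiv eq_equivalence
  | n + 1 => fsjump_equiv (eqNat_equiv n)

/-- Tagged union of countably many sequences. -/
def tagU (tg : ℕ → X → Y) (p : ℕ → ℕ → X) : ℕ → Y :=
  fun z => tg (Nat.unpair z).1 (p (Nat.unpair z).1 (Nat.unpair z).2)

theorem tagU_iff {E : X → X → Prop} {E' : Y → Y → Prop} {tg : ℕ → X → Y}
    (h : ∀ t s x y, E' (tg t x) (tg s y) ↔ t = s ∧ E x y) (p q : ℕ → ℕ → X) :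
    FSJump E' (tagU tg p) (tagU tg q) ↔ ∀ t, FSJump E (p t) (q t) := by
  have key : ∀ p q : ℕ → ℕ → X, (∀ k, ∃ l, E' (tagU tg p k) (tagU tg q l)) ↔
      ∀ t k, ∃ l, E (p t k) (q t l) := by
    intro p q
    constructor
    · intro H t k
      obtain ⟨l, hl⟩ := H (Nat.pair t k)
      simp only [tagU, h, Nat.unpair_pair] at hl
      exact ⟨(Nat.unpair l).2, by have h2 := hl.2; rw [← hl.1] at h2; exact h2⟩
    · intro H k
      obtain ⟨l, hl⟩ := H (Nat.unpair k).1 (Nat.unpair k).2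
      refine ⟨Nat.pair (Nat.unpair k).1 l, ?_⟩
      simp only [tagU, h, Nat.unpair_pair]
      exact ⟨trivial, hl⟩
  unfold FSJump
  rw [key p q, key q p, forall_and]

theorem otimes_iff : ∀ (m t s : ℕ) (p q : Tower m),
    eqNatPlus m (otimes m t p) (otimes m s q) ↔ t = s ∧ eqNatPlus m p q
  | 0, t, s, p, q => by
    simp only [eqNatPlus, FSJump, otimes, Nat.pair_eq_pair]
    constructor
    · rintro ⟨a, b⟩
      obtain ⟨l, hl⟩ := a 0
      exact ⟨hl.2, fun k => (a k).imp fun _ h => h.1, fun k => (b k).imp fun _ h => h.1⟩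
    · rintro ⟨rfl, a, b⟩
      exact ⟨fun k => (a k).imp fun _ h => ⟨h, rfl⟩, fun k => (b k).imp fun _ h => ⟨h, rfl⟩⟩
  | m + 1, t, s, p, q => by
    simp only [eqNatPlus, FSJump, otimes, otimes_iff m]
    constructor
    · rintro ⟨a, b⟩
      obtain ⟨l, hl⟩ := a 0
      exact ⟨hl.1, fun k => (a k).imp fun _ h => h.2, fun k => (b k).imp fun _ h => h.2⟩
    · rintro ⟨rfl, a, b⟩
      exact ⟨fun k => (a k).imp fun _ h => ⟨rfl, h⟩, fun k => (b k).imp fun _ h => ⟨rfl, h⟩⟩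

theorem otimes_cont_s12 : ∀ (m t : ℕ), Continuous (otimes m t)
  | 0, t => by
    have : Continuous fun (p : ℕ → ℕ) k => Nat.pair (p k) t := continuous_pi fun k =>
      (continuous_of_discreteTopology (f := fun x => Nat.pair x t)).comp (continuous_apply k)
    exact this
  | m + 1, t => by
    have : Continuous fun (p : ℕ → Tower m) k => otimes m t (p k) := continuous_pi fun k =>
      (otimes_cont_s12 m t).comp (continuous_apply k)
    exact this

theorem tagU_cont [TopologicalSpace X] [TopologicalSpace Y] {tg : ℕ → X → Y}
    (h : ∀ t, Continuous (tg t)) : Continuous (tagU tg) :=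
  continuous_pi fun z => (h _).comp ((continuous_apply _).comp (continuous_apply _))

/-- union on the tower -/
def towU : (m : ℕ) → (ℕ → Tower m) → Tower m
  | 0 => tagU (fun t x => Nat.pair x t)
  | m + 1 => tagU (otimes m)

theorem towU_iff : ∀ (m : ℕ) (p q : ℕ → Tower m),
    eqNatPlus m (towU m p) (towU m q) ↔ ∀ t, eqNatPlus m (p t) (q t)
  | 0, p, q => tagU_iff (E := (· = ·)) (E' := (· = ·))
      (tg := fun t x => Nat.pair x t)
      (fun t s x y => by simp [Nat.pair_eq_pair, and_comm]) p q
  | m + 1, p, q => tagU_iff (otimes_iff m) p q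

theorem towU_cont : ∀ m, Continuous (towU m)
  | 0 => tagU_cont (X := ℕ) (Y := ℕ) (tg := fun t x => Nat.pair x t) fun _ => continuous_of_discreteTopology
  | m + 1 => tagU_cont (otimes_cont_s12 m)

end Jump

open Classical in
/-- Canonical pair. -/
noncomputable def FI : (m : ℕ) → Tower m × Tower m
  | 0 => (fun k => if k = 0 then 0 else 1, fun _ => 1)
  | m + 1 =>
    (fun i => if i = 0 then towU m (fun _ => (FI m).1)
        else towU m (fun j => if j < i - 1 then (FI m).1 else (FI m).2),
     fun i => towU m (fun j => if j < i then (FI m).1 else (FI m).2))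

theorem FI_ne : ∀ m, ¬ eqNatPlus m (FI m).1 (FI m).2
  | 0 => by
    rintro ⟨a, -⟩
    obtain ⟨l, hl⟩ := a 0
    simp [FI] at hl
  | m + 1 => by
    rintro ⟨a, -⟩
    obtain ⟨l, hl⟩ := a 0
    simp only [FI, if_true] at hl
    rw [towU_iff] at hl
    have := hl l
    simp only [lt_irrefl, if_false] at this
    exact FI_ne m this

theorem open_map {X : Type*} [TopologicalSpace X] [SecondCountableTopology X]
    (hX : IsTopologicalBasis {s : Set X | IsClopen s}) (C : Set X) (hC : IsOpen C) :
    ∃ f : X → ℕ → ℕ, Continuous f ∧ (∀ x ∈ C, FSJump (· = ·) (f x) (FI 0).1) ∧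
      (∀ x ∉ C, FSJump (· = ·) (f x) (FI 0).2) := by
  classical
  obtain ⟨S, hS, rfl⟩ := hX.open_eq_sUnion hC
  obtain ⟨T, hTc, hTS, hT⟩ := isOpen_sUnion_countable S (fun s hs => (hS hs).isOpen)
  rw [← hT]
  have hcl : ∀ s ∈ insert ∅ T, IsClopen s := by
    rintro s (rfl | h)
    · exact isClopen_empty
    · exact hS (hTS h)
  obtain ⟨e, he⟩ := (hTc.insert ∅).exists_eq_range (insert_nonempty _ _)
  have hecl : ∀ i, IsClopen (e i) := fun i => hcl _ (he ▸ mem_range_self i)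
  have hmem : ∀ x, x ∈ ⋃₀ T ↔ ∃ i, x ∈ e i := by
    intro x
    constructor
    · rintro ⟨s, hs, hx⟩
      have : s ∈ range e := he ▸ mem_insert_of_mem _ hs
      obtain ⟨i, rfl⟩ := this
      exact ⟨i, hx⟩
    · rintro ⟨i, hi⟩
      have : e i ∈ insert ∅ T := he ▸ mem_range_self i
      rcases this with h | h
      · simp [h] at hi
      · exact ⟨_, h, hi⟩
  refine ⟨fun x k => if k = 0 then 1 else if x ∈ e (k - 1) then 0 else 1, ?_, ?_, ?_⟩
  · refine continuous_pi fun k => ?_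
    by_cases hk : k = 0
    · simp only [hk, if_true]; exact continuous_const
    · simp only [hk, if_false]
      refine continuous_const.if ?_ continuous_const
      intro a ha
      have : frontier (e (k - 1)) = ∅ := (hecl _).frontier_eq
      change a ∈ frontier (e (k - 1)) at ha
      simp [this] at ha
  · intro x hx
    obtain ⟨i, hi⟩ := (hmem x).1 hx
    constructor
    · intro k
      by_cases hk : k = 0
      · exact ⟨1, by simp [hk, FI]⟩
      · by_cases hx : x ∈ e (k - 1)
        · exact ⟨0, by simp [hk, FI, hx]⟩
        · exact ⟨1, by simp [hk, FI, hx]⟩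
    · intro k
      by_cases hk : k = 0
      · exact ⟨i + 1, by simp [hk, FI, hi]⟩
      · exact ⟨0, by simp [hk, FI]⟩
  · intro x hx
    have h' : ∀ i, x ∉ e i := fun i hi => hx ((hmem x).2 ⟨i, hi⟩)
    exact ⟨fun k => ⟨0, by simp [FI, h']⟩, fun k => ⟨0, by simp [FI]⟩⟩

theorem sig_map {X : Type*} [TopologicalSpace X] [SecondCountableTopology X]
    (hX : IsTopologicalBasis {s : Set X | IsClopen s}) : ∀ (m : ℕ) (C : Set X)
    (_ : C ∈ SigmaLevel X (2 * m)),
    ∃ f : X → Tower m, Continuous f ∧ (∀ x ∈ C, eqNatPlus m (f x) (FI m).1) ∧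
      (∀ x ∉ C, eqNatPlus m (f x) (FI m).2)
  | 0, C, hC => open_map hX C hC
  | m + 1, C, hC => by
    classical
    obtain ⟨D, hD, rfl⟩ := hC
    choose B' hB' hDB using hD
    let B : ℕ → ℕ → Set X := fun k j => {x | ∀ i ≤ j, x ∈ B' k i}
    have hB : ∀ k j, B k j ∈ SigmaLevel X (2 * m) := fun k j => sig_iInter_le (hB' k) j
    have hBanti : ∀ k x i j, i ≤ j → x ∈ B k j → x ∈ B k i :=
      fun k x i j hij h l hl => h l (hl.trans hij)
    have hC : ∀ x, x ∈ (⋃ i, (D i)ᶜ) ↔ ∃ k, ∀ j, x ∈ B k j := by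
      intro x
      simp only [mem_iUnion, hDB, mem_compl_iff, not_exists, not_not]
      exact exists_congr fun k => ⟨fun h j i _ => h i, fun h j => h j j le_rfl⟩
    choose f hfc hf1 hf2 using fun k j => sig_map hX m (B k j) (hB k j)
    let seg : ℕ → Tower m := fun i => towU m (fun j => if j < i then (FI m).1 else (FI m).2)
    let g : X → ℕ → Tower m := fun x z => if z % 2 = 0 then
      towU m (fun j => f (z / 2) j x) else seg (z / 2)
    have E := eqNat_equiv m
    have hseg : ∀ x k, (¬ ∀ j, x ∈ B k j) → ∃ i, eqNatPlus m (towU m (fun j => f k j x)) (seg i) := by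
      intro x k h
      push Not at h
      refine ⟨Nat.find h, (towU_iff _ _ _).2 fun j => ?_⟩
      split_ifs with hj
      · exact hf1 k j x (by simpa using Nat.find_min h hj)
      · exact hf2 k j x fun hh => Nat.find_spec h (hBanti k x _ _ (not_lt.1 hj) hh)
    have hfull : ∀ x k, (∀ j, x ∈ B k j) →
        eqNatPlus m (towU m (fun j => f k j x)) (towU m (fun _ => (FI m).1)) :=
      fun x k h => (towU_iff _ _ _).2 fun j => hf1 k j x (h j)
    have hodd : ∀ x i, g x (2 * i + 1) = seg i := by
      intro x i
      have h1 : (2 * i + 1) % 2 = 1 := by omega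
      have h2 : (2 * i + 1) / 2 = i := by omega
      simp [g, h1, h2]
    have heven : ∀ x i, g x (2 * i) = towU m (fun j => f i j x) := by
      intro x i
      have h1 : (2 * i) % 2 = 0 := by omega
      have h2 : (2 * i) / 2 = i := by omega
      simp [g, h2]
    have hF0 : ((FI (m + 1)).1 : ℕ → Tower m) 0 = towU m (fun _ => (FI m).1) := by simp [FI]
    have hF1 : ∀ i, ((FI (m + 1)).1 : ℕ → Tower m) (i + 1) = seg i := by intro i; simp [FI, seg]
    have hI : ∀ i, ((FI (m + 1)).2 : ℕ → Tower m) i = seg i := by intro i; simp [FI, seg]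
    refine ⟨g, ?_, ?_, ?_⟩
    · have : Continuous g := by
        refine continuous_pi fun z => ?_
        by_cases hz : z % 2 = 0
        · simp only [g, hz, if_true]
          exact (towU_cont m).comp (continuous_pi fun j => hfc _ j)
        · simp only [g, hz, if_false]
          exact continuous_const
      exact this
    · intro x hx
      obtain ⟨k, hk⟩ := (hC x).1 hx
      constructor
      · intro z
        rcases Nat.even_or_odd' z with ⟨i, rfl | rfl⟩
        · rw [heven]
          by_cases h : ∀ j, x ∈ B i j
          · exact ⟨0, by rw [hF0]; exact hfull x i h⟩
          · obtain ⟨l, hl⟩ := hseg x i h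
            exact ⟨l + 1, by rw [hF1]; exact hl⟩
        · exact ⟨i + 1, by rw [hodd, hF1]; exact E.refl _⟩
      · intro z
        rcases z with _ | z
        · exact ⟨2 * k, by rw [heven, hF0]; exact E.symm (hfull x k hk)⟩
        · exact ⟨2 * z + 1, by rw [hodd, hF1]; exact E.refl _⟩
    · intro x hx
      have hx' := fun h => hx ((hC x).2 h)
      constructor
      · intro z
        rcases Nat.even_or_odd' z with ⟨i, rfl | rfl⟩
        · rw [heven]
          obtain ⟨l, hl⟩ := hseg x i fun h => hx' ⟨i, h⟩
          exact ⟨l, by rw [hI]; exact hl⟩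
        · exact ⟨i, by rw [hodd, hI]; exact E.refl _⟩
      · intro z
        exact ⟨2 * z + 1, by rw [hodd, hI]; exact E.refl _⟩

/-! Forward direction. -/

theorem not_fsjump_sig {X : Type*} [TopologicalSpace X] {E : X → X → Prop} (N : ℕ)
    (hA : ∀ (x : ℕ → X) k, {p : ℕ → X | ∃ l, E (p k) (x l)} ∈ SigmaLevel (ℕ → X) N)
    (hB : ∀ (x : X), {p : ℕ → X | ∃ k, E x (p k)} ∈ SigmaLevel (ℕ → X) N) (x : ℕ → X) :
    {p : ℕ → X | ¬ FSJump E p x} ∈ SigmaLevel (ℕ → X) (N + 1) := by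
  have : {p : ℕ → X | ¬ FSJump E p x} = (⋃ k, {p : ℕ → X | ∃ l, E (p k) (x l)}ᶜ) ∪
      ⋃ l, {p : ℕ → X | ∃ k, E (x l) (p k)}ᶜ := by
    ext p
    simp only [FSJump, mem_setOf_eq, mem_union, mem_iUnion, mem_compl_iff]
    rw [not_and_or, not_forall, not_forall]
  rw [this]
  exact sig_union (sig_iUnion_compl fun k => hA _ _) (sig_iUnion_compl fun k => hB _)

theorem nat_AB : (∀ (x : ℕ → ℕ) k, {p : ℕ → ℕ | ∃ l, (p k) = (x l)} ∈ SigmaLevel (ℕ → ℕ) 0) ∧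
    (∀ (x : ℕ), {p : ℕ → ℕ | ∃ k, x = (p k)} ∈ SigmaLevel (ℕ → ℕ) 0) := by
  constructor
  · intro x k
    exact (isOpen_discrete {y | ∃ l, y = x l}).preimage
      (continuous_apply (A := fun _ : ℕ => ℕ) k)
  · intro x
    have : {p : ℕ → ℕ | ∃ k, x = (p k)} = ⋃ k, (fun p : ℕ → ℕ => p k) ⁻¹' {x} := by
      ext p; simp [eq_comm]
    rw [this]
    exact isOpen_iUnion fun k => (isOpen_discrete {x}).preimage (continuous_apply k)

theorem step_AB {X : Type*} [TopologicalSpace X] {E : X → X → Prop} (hE : Equivalence E) (N : ℕ)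
    (h : ∀ x, {y | ¬ E y x} ∈ SigmaLevel X N) :
    (∀ (x : ℕ → X) k, {p : ℕ → X | ∃ l, E (p k) (x l)} ∈ SigmaLevel (ℕ → X) (N + 1)) ∧
    (∀ (x : X), {p : ℕ → X | ∃ k, E x (p k)} ∈ SigmaLevel (ℕ → X) (N + 1)) := by
  constructor
  · intro x k
    refine ⟨fun l => (fun p : ℕ → X => p k) ⁻¹' {y | ¬ E y (x l)},
      fun l => sig_preimage (continuous_apply k) _ _ (h _), ?_⟩
    ext p; simp
  · intro x
    refine ⟨fun l => (fun p : ℕ → X => p l) ⁻¹' {y | ¬ E y x},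
      fun l => sig_preimage (continuous_apply l) _ _ (h _), ?_⟩
    ext p
    simp only [mem_setOf_eq, mem_iUnion, mem_compl_iff, mem_preimage, not_not]
    exact exists_congr fun k => ⟨fun h => hE.symm h, fun h => hE.symm h⟩

theorem tower_not_sig : ∀ (m : ℕ) (x : Tower m),
    {p | ¬ eqNatPlus m p x} ∈ SigmaLevel (Tower m) (2 * m + 1)
  | 0, x => not_fsjump_sig (X := ℕ) 0 nat_AB.1 nat_AB.2 x
  | m + 1, x =>
    let H := step_AB (eqNat_equiv m) (2 * m + 1) (tower_not_sig m)
    not_fsjump_sig (X := Tower m) (2 * m + 2) H.1 H.2 x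

theorem fsjump_sep {X : Type*} [TopologicalSpace X] {E : X → X → Prop} (hE : Equivalence E) (N : ℕ)
    (hB : ∀ (x : X), {p : ℕ → X | ∃ k, E x (p k)} ∈ SigmaLevel (ℕ → X) N) (p q : ℕ → X)
    (h : ¬ FSJump E p q) : ∃ C ∈ SigmaLevel (ℕ → X) N,
      (∀ r s, FSJump E r s → s ∈ C → r ∈ C) ∧ ((p ∈ C ∧ q ∉ C) ∨ (q ∈ C ∧ p ∉ C)) := by
  have inv : ∀ x, ∀ r s, FSJump E r s → s ∈ {p : ℕ → X | ∃ k, E x (p k)} →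
      r ∈ {p : ℕ → X | ∃ k, E x (p k)} := by
    rintro x r s hrs ⟨k, hk⟩
    obtain ⟨l, hl⟩ := hrs.2 k
    exact ⟨l, hE.trans hk hl⟩
  rw [FSJump, not_and_or] at h
  push Not at h
  rcases h with ⟨k, hk⟩ | ⟨k, hk⟩
  · exact ⟨_, hB (p k), inv _, Or.inl ⟨⟨k, hE.refl _⟩, fun ⟨l, hl⟩ => hk l hl⟩⟩
  · exact ⟨_, hB (q k), inv _, Or.inr ⟨⟨k, hE.refl _⟩, fun ⟨l, hl⟩ => hk l hl⟩⟩

theorem tower_sep : ∀ (m : ℕ) (p q : Tower m) (_ : ¬ eqNatPlus m p q),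
    ∃ C ∈ SigmaLevel (Tower m) (2 * m),
      (∀ r s, eqNatPlus m r s → s ∈ C → r ∈ C) ∧ ((p ∈ C ∧ q ∉ C) ∨ (q ∈ C ∧ p ∉ C))
  | 0, p, q, h => fsjump_sep (X := ℕ) eq_equivalence 0 nat_AB.2 p q h
  | m + 1, p, q, h => fsjump_sep (X := Tower m) (eqNat_equiv m) (2 * m + 2)
      (step_AB (eqNat_equiv m) (2 * m + 1) (tower_not_sig m)).2 p q h

theorem md_clopen {ι : Type} (ar : ι → ℕ) :
    IsTopologicalBasis {s : Set (Md ι ar) | IsClopen s} := by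
  have : IsTopologicalBasis {s : Set (∀ i : ι, (Fin (ar i) → ℕ) → Bool) | IsClopen s} :=
    isTopologicalBasis_isClopen
  exact this

theorem md_sc {ι : Type} [Countable ι] (ar : ι → ℕ) : SecondCountableTopology (Md ι ar) :=
  inferInstanceAs (SecondCountableTopology (∀ i : ι, (Fin (ar i) → ℕ) → Bool))

/-- for `n ≥ 1` (via the shift: `eqNatPlus n = =_ℕ^{(n+1)+}`,
`SigmaLevel (Md ι ar) (2*n) = Σ⁰_{2(n+1)-1}`), a countable family `{A i : i ∈ ℕ}` of
pairwise nonisomorphic structures is `=_ℕ^{(n+1)+}`-learnable iff any two of its members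
are separated (up to isomorphism) by a `Σ⁰_{2(n+1)-1}` set. -/
theorem stmt_12 {ι : Type} [Countable ι] (ar : ι → ℕ) (har : ∃ i, 2 ≤ ar i) (n : ℕ)
    (A : ℕ → Md ι ar) (hA : ∀ i j, i ≠ j → ¬ Iso (A i) (A j)) :
    Learnable (eqNatPlus n) (Set.range A) ↔
      ∀ i j, i ≠ j → ∃ C ∈ SigmaLevel (Md ι ar) (2 * n),
        ((∀ S, Iso S (A i) → S ∈ C) ∧ (∀ S, Iso S (A j) → S ∉ C)) ∨
        ((∀ S, Iso S (A j) → S ∈ C) ∧ (∀ S, Iso S (A i) → S ∉ C)) := by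
  constructor
  · rintro ⟨Γ, hΓ, hiff⟩ i j hij
    let a : LearnDom (Set.range A) := ⟨A i, A i, mem_range_self i, iso_refl _⟩
    let b : LearnDom (Set.range A) := ⟨A j, A j, mem_range_self j, iso_refl _⟩
    have hne : ¬ eqNatPlus n (Γ a) (Γ b) := fun h => hA i j hij ((hiff a b).2 h)
    obtain ⟨C, hC, hinv, hsep⟩ := tower_sep n _ _ hne
    obtain ⟨D, hD, hDC⟩ := sig_subtype _ _ _ (sig_preimage hΓ _ _ hC)
    have hmem : ∀ S : LearnDom (Set.range A), S.1 ∈ D ↔ Γ S ∈ C := by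
      intro S
      have : S ∈ Γ ⁻¹' C ↔ S ∈ Subtype.val ⁻¹' D := by rw [hDC]
      exact this.symm
    have hiso : ∀ (S : Md ι ar) (c : LearnDom (Set.range A)), Iso S c.1 → (S ∈ D ↔ Γ c ∈ C) := by
      intro S c h
      have hS : S ∈ LearnDom (Set.range A) := by
        obtain ⟨B, hB, hcB⟩ := c.2
        exact ⟨B, hB, iso_trans h hcB⟩
      rw [hmem ⟨S, hS⟩]
      have hE := (hiff ⟨S, hS⟩ c).1 h
      exact ⟨hinv _ _ ((eqNat_equiv n).symm hE), hinv _ _ hE⟩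
    refine ⟨D, hD, ?_⟩
    rcases hsep with ⟨h1, h2⟩ | ⟨h1, h2⟩
    · exact Or.inl ⟨fun S hS => (hiso S a hS).2 h1, fun S hS h => h2 ((hiso S b hS).1 h)⟩
    · exact Or.inr ⟨fun S hS => (hiso S b hS).2 h1, fun S hS h => h2 ((hiso S a hS).1 h)⟩
  · intro H
    have hsc := md_sc ar
    have H' : ∀ t : ℕ, ∃ D ∈ SigmaLevel (Md ι ar) (2 * n),
        (∀ S T, Iso S T → T ∈ D → S ∈ D) ∧ ((Nat.unpair t).1 ≠ (Nat.unpair t).2 →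
          ¬ (A (Nat.unpair t).1 ∈ D ↔ A (Nat.unpair t).2 ∈ D)) := by
      intro t
      by_cases ht : (Nat.unpair t).1 = (Nat.unpair t).2
      · exact ⟨univ, (sig_univ_empty _).1, fun _ _ _ _ => mem_univ _, fun h => absurd ht h⟩
      · obtain ⟨C, hC, hsep⟩ := H _ _ ht
        obtain ⟨D, hD, hinv, hin, hout⟩ := exists_invariant _ C hC
        refine ⟨D, hD, hinv, fun _ => ?_⟩
        rcases hsep with ⟨h1, h2⟩ | ⟨h1, h2⟩
        · exact fun h => hout _ h2 (h.1 (hin _ h1))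
        · exact fun h => hout _ h2 (h.2 (hin _ h1))
    choose D hD hinv hsep using H'
    choose f hfc hf1 hf2 using fun t => sig_map (md_clopen ar) n (D t) (hD t)
    have E := eqNat_equiv n
    refine ⟨fun S => towU n (fun t => f t S.1), (towU_cont n).comp
      (continuous_pi fun t => (hfc t).comp continuous_subtype_val), ?_⟩
    intro S S'
    rw [towU_iff]
    constructor
    · intro h t
      by_cases hS : S.1 ∈ D t
      · exact E.trans (hf1 t _ hS) (E.symm (hf1 t _ (hinv t _ _ (iso_symm h) hS)))
      · exact E.trans (hf2 t _ hS) (E.symm (hf2 t _ fun h' => hS (hinv t _ _ h h')))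
    · intro h
      obtain ⟨_, ⟨i, rfl⟩, hi⟩ := S.2
      obtain ⟨_, ⟨j, rfl⟩, hj⟩ := S'.2
      by_cases hij : i = j
      · subst hij
        exact iso_trans hi (iso_symm hj)
      · exfalso
        have hs := hsep (Nat.pair i j)
        simp only [Nat.unpair_pair] at hs
        apply hs hij
        have h1 : A i ∈ D (Nat.pair i j) ↔ S.1 ∈ D (Nat.pair i j) :=
          ⟨hinv _ _ _ hi, hinv _ _ _ (iso_symm hi)⟩
        have h2 : A j ∈ D (Nat.pair i j) ↔ S'.1 ∈ D (Nat.pair i j) :=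
          ⟨hinv _ _ _ hj, hinv _ _ _ (iso_symm hj)⟩
        rw [h1, h2]
        have ht := h (Nat.pair i j)
        by_cases hS : S.1 ∈ D (Nat.pair i j) <;> by_cases hS' : S'.1 ∈ D (Nat.pair i j)
        · simp [hS, hS']
        · exact absurd (E.trans (E.symm (hf1 _ _ hS)) (E.trans ht (hf2 _ _ hS'))) (FI_ne n)
        · exact absurd (E.trans (E.symm (hf1 _ _ hS')) (E.trans (E.symm ht) (hf2 _ _ hS))) (FI_ne n)
        · simp [hS, hS']
end
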